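/- arXiv:2408.00895 — 2 statements merged into one kernel-verified Lean document; each statement's English description precedes it below -/
import Mathlib

section
/- Let n ∈ ℕ, x ∈ {0,1}^n (encoded as x : Fin n → Fin 2), and p₊, p₋ ∈ [0,1]. Set θ₀ = 2·arccos(√(1−p₊)) and θ_D = −2(arccos(√(1−p₊)) + arccos(√(1−p₋))). Let DL(x) be the tensor product of the matrices RY(θ₀ + x_m·θ_D) for m = 0,…,n−1. Then DL(x) applied to the basis vector e_x equals the vector whose entry at index x̃ ∈ {0,1}^n is √(φ(x̃|x)); that is, DL(x)·e_x = Σ_{x̃} √(φ(x̃|x)) · e_{x̃}. -/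
open Matrix

/-- The single-qubit rotation `RY θ` as a complex 2×2 matrix. -/
noncomputable def RY (θ : ℝ) : Matrix (Fin 2) (Fin 2) ℂ :=
  !![(Real.cos (θ / 2) : ℂ), -(Real.sin (θ / 2) : ℂ);
     (Real.sin (θ / 2) : ℂ), (Real.cos (θ / 2) : ℂ)]

/-- Tensor product of `n` 2×2 complex matrices, indexed by `Fin n → Fin 2`. -/
noncomputable def tensorProd {n : ℕ} (A : Fin n → Matrix (Fin 2) (Fin 2) ℂ) :
    Matrix (Fin n → Fin 2) (Fin n → Fin 2) ℂ :=
  fun i j => ∏ m, A m (i m) (j m)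

/-- The standard basis vector of `ℂ^(Fin n → Fin 2)` supported at `x`. -/
noncomputable def basisVec {n : ℕ} (x : Fin n → Fin 2) : (Fin n → Fin 2) → ℂ :=
  Pi.single x 1

/-- The sparsity-aware PMF `φ(x̃ | x; p₊, p₋)`:
each bit flips with probability `p₊` if it is `0` and `p₋` if it is `1`. -/
def phi {n : ℕ} (pPlus pMinus : ℝ) (x xt : Fin n → Fin 2) : ℝ :=
  ∏ j, (if xt j ≠ x j then (if x j = 0 then pPlus else pMinus)
        else 1 - (if x j = 0 then pPlus else pMinus))

theorem cos_arccos_aux (p : ℝ) (h0 : 0 ≤ p) (h1 : p ≤ 1) :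
    Real.cos (Real.arccos (Real.sqrt (1 - p))) = Real.sqrt (1 - p) ∧
    Real.sin (Real.arccos (Real.sqrt (1 - p))) = Real.sqrt p := by
  constructor
  · apply Real.cos_arccos
    · linarith [Real.sqrt_nonneg (1 - p)]
    · exact Real.sqrt_le_one.mpr (by linarith)
  · rw [Real.sin_arccos, Real.sq_sqrt (by linarith)]
    congr 1
    ring

theorem distLoader_on_ex {n : ℕ} (x : Fin n → Fin 2) (pPlus pMinus : ℝ)
    (hp0 : 0 ≤ pPlus) (hp1 : pPlus ≤ 1) (hm0 : 0 ≤ pMinus) (hm1 : pMinus ≤ 1) :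
    (tensorProd (fun m => RY (2 * Real.arccos (Real.sqrt (1 - pPlus)) +
        (x m : ℝ) * (-2 * (Real.arccos (Real.sqrt (1 - pPlus)) +
          Real.arccos (Real.sqrt (1 - pMinus))))))) *ᵥ basisVec x =
      fun xt => (Real.sqrt (phi pPlus pMinus x xt) : ℂ) := by
  obtain ⟨c1, s1⟩ := cos_arccos_aux pPlus hp0 hp1
  obtain ⟨c2, s2⟩ := cos_arccos_aux pMinus hm0 hm1
  funext xt
  rw [basisVec, Matrix.mulVec_single_one]
  simp only [Matrix.col_apply, tensorProd, phi]
  rw [Real.sqrt_prod]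
  · rw [Complex.ofReal_prod]
    refine Finset.prod_congr rfl fun m _ => ?_
    have e0 : (2 * Real.arccos (Real.sqrt (1 - pPlus))) / 2
        = Real.arccos (Real.sqrt (1 - pPlus)) := by ring
    have e1 : (2 * Real.arccos (Real.sqrt (1 - pPlus)) +
        (-(2 * (Real.arccos (Real.sqrt (1 - pPlus)) +
          Real.arccos (Real.sqrt (1 - pMinus)))))) / 2
        = -Real.arccos (Real.sqrt (1 - pMinus)) := by ring
    generalize x m = a
    generalize xt m = b
    fin_cases a <;> fin_cases b <;>
      simp [RY, e0, e1, c1, s1, c2, s2, -Complex.ofReal_cos, -Complex.ofReal_sin]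
  · intro m _
    split_ifs <;> linarith
end

section
/- (Distribution loader, Lemma 1.) Let n ∈ ℕ, x ∈ {0,1}^n (encoded as x : Fin n → Fin 2), and p₊, p₋ ∈ [0,1]. Set θ₀ = 2·arccos(√(1−p₊)) and θ_D = −2(arccos(√(1−p₊)) + arccos(√(1−p₋))). Define U(x, p₋, p₊) as the matrix product DL(x)·D(x), where DL(x) is the tensor product of the matrices RY(θ₀ + x_m·θ_D) and D(x) is the tensor product of the matrices RX(x_m·π), for m = 0,…,n−1. Then U(x, p₋, p₊) applied to the basis vector e_𝟘 equals (−i)^{Σ_j x_j} · Σ_{x̃ ∈ {0,1}^n} √(φ(x̃|x)) · e_{x̃}; i.e., up to the global phase (−i)^{Σ_j x_j}, U(x, p₋, p₊)|0⟩ is the superposition |Ψ(x)⟩ = Σ_{x̃} √(φ(x̃|x)) |x̃⟩ of all perturbations of x weighted by the square roots of their transition probabilities. -/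
open Matrix

/-- The single-qubit rotation `RX θ` as a complex 2×2 matrix. -/
noncomputable def RX (θ : ℝ) : Matrix (Fin 2) (Fin 2) ℂ :=
  !![(Real.cos (θ / 2) : ℂ), -Complex.I * (Real.sin (θ / 2) : ℂ);
     -Complex.I * (Real.sin (θ / 2) : ℂ), (Real.cos (θ / 2) : ℂ)]

lemma loader_qubit (a b : Fin 2) (p q : ℝ)
    (hp0 : 0 ≤ p) (hp1 : p ≤ 1) (hm0 : 0 ≤ q) (hm1 : q ≤ 1) :
    ∑ k : Fin 2, RY (2 * Real.arccos (Real.sqrt (1 - p)) +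
        (a : ℝ) * (-2 * (Real.arccos (Real.sqrt (1 - p)) +
          Real.arccos (Real.sqrt (1 - q))))) b k * RX ((a : ℝ) * Real.pi) k 0 =
    (-Complex.I) ^ (a : ℕ) * (Real.sqrt (if b ≠ a then (if a = 0 then p else q)
        else 1 - (if a = 0 then p else q)) : ℂ) := by
  have key : ∀ r : ℝ, 0 ≤ r → r ≤ 1 → Real.cos (Real.arccos (Real.sqrt (1 - r))) = √(1 - r) ∧
      Real.sin (Real.arccos (Real.sqrt (1 - r))) = √r := by
    intro r h0 h1
    have h2 : √(1 - r) ≤ 1 := Real.sqrt_le_one.mpr (by linarith)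
    refine ⟨Real.cos_arccos (by linarith [Real.sqrt_nonneg (1 - r)]) h2, ?_⟩
    rw [Real.sin_arccos, Real.sq_sqrt (by linarith)]
    congr 1
    ring
  obtain ⟨c1, s1⟩ := key p hp0 hp1
  obtain ⟨c2, s2⟩ := key q hm0 hm1
  have e0 : ∀ u : ℝ, 2 * u / 2 = u := fun u => by ring
  have e1 : ∀ u v : ℝ, (2 * u + -2 * (u + v)) / 2 = -v := fun u v => by ring
  fin_cases a
  · fin_cases b <;>
      simp [RY, RX, Fin.sum_univ_two, e0, c1, s1, -Complex.ofReal_cos, -Complex.ofReal_sin]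
  · fin_cases b <;>
      simp only [RY, RX, Fin.sum_univ_two, Fin.mk_one, Fin.zero_eta, Fin.val_one, Nat.cast_one,
        one_mul, e1, Real.cos_neg, Real.sin_neg, c2, s2, Real.cos_pi_div_two,
        Real.sin_pi_div_two] <;> simp [mul_comm]

/-- Distribution-loader lemma (Lemma 1): `U(x, p₋, p₊) = DL(x) · D(x)` maps `|0…0⟩`
to the superposition `|Ψ(x)⟩` of all perturbations, up to the global phase
`(−i)^{Σ_j x_j}`. -/
theorem distribution_loader {n : ℕ} (x : Fin n → Fin 2) (pPlus pMinus : ℝ)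
    (hp0 : 0 ≤ pPlus) (hp1 : pPlus ≤ 1) (hm0 : 0 ≤ pMinus) (hm1 : pMinus ≤ 1) :
    ((tensorProd (fun m => RY (2 * Real.arccos (Real.sqrt (1 - pPlus)) +
        (x m : ℝ) * (-2 * (Real.arccos (Real.sqrt (1 - pPlus)) +
          Real.arccos (Real.sqrt (1 - pMinus))))))) *
      (tensorProd (fun m => RX ((x m : ℝ) * Real.pi)))) *ᵥ basisVec (fun _ => 0) =
      (-Complex.I) ^ (∑ j, (x j : ℕ)) •
        ∑ xt : Fin n → Fin 2, (Real.sqrt (phi pPlus pMinus x xt) : ℂ) • basisVec xt := by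
  ext xt
  have hs : Real.sqrt (phi pPlus pMinus x xt) = ∏ j, Real.sqrt
      (if xt j ≠ x j then (if x j = 0 then pPlus else pMinus)
        else 1 - (if x j = 0 then pPlus else pMinus)) := by
    unfold phi
    rw [Real.sqrt_eq_rpow, ← Real.finsetProd_rpow]
    · simp only [Real.sqrt_eq_rpow]
    · intro j _
      split_ifs <;> linarith
  have hr : (∑ y : Fin n → Fin 2, (Real.sqrt (phi pPlus pMinus x y) : ℂ) • basisVec y) xt
      = (Real.sqrt (phi pPlus pMinus x xt) : ℂ) := by
    simp [Finset.sum_apply, basisVec, Pi.single_apply]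
  rw [Pi.smul_apply, hr, hs, smul_eq_mul, ← Finset.prod_pow_eq_pow_sum, Complex.ofReal_prod,
    ← Finset.prod_mul_distrib]
  simp only [← loader_qubit _ _ pPlus pMinus hp0 hp1 hm0 hm1]
  rw [Finset.prod_univ_sum, Fintype.piFinset_univ]
  simp only [basisVec, Matrix.mulVec_single_one, Matrix.col_apply, Matrix.mul_apply, tensorProd,
    Finset.prod_mul_distrib]
end
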